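/- Let q > 3 be a prime such that p = 4q + 1 is also prime. Then there is no nontrivial difference set in the cyclic group ZMod p: every difference set D in the additive group ZMod p satisfies |D| ≤ 1 or |D| ≥ p − 1. -/

import Mathlib

/-- A subset `D` of the additive group `ZMod p` is a difference set with parameter `lam`
(a positive integer) if every nonzero `g : ZMod p` has exactly `lam` representations
`g = d₂ - d₁` with `d₁, d₂ ∈ D`. -/
def IsDiffSetZMod (p : ℕ) (D : Finset (ZMod p)) (lam : ℕ) : Prop :=
  0 < lam ∧ ∀ g : ZMod p, g ≠ 0 →
    ((D ×ˢ D).filter (fun x => x.2 - x.1 = g)).card = lam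

/-!
Passing to the complement, `k = #D ≤ 2 * q`, and the count `k * (k - 1) = 4 * q * lam` leaves only
`k = q` and `k = q + 1`. Let `n = k - lam` and let `t` have order `q` in `(ZMod p)ˣ`. A prime `r`
dividing `n` has nontrivial order dividing `4 * q`, so its powers include `t` or `-1`: above `r`,
either `t` or complex conjugation fixes the prime ideals of the `p`-th cyclotomic field. Since the
character sum `θ` of `D` satisfies `θ * conj θ = n`, the ideal `(θ)` is then `t`-invariant, and `t`
is a multiplier of `D`. Up to translation and dilation, `D` is therefore the group of biquadratic
residues, possibly together with `0`, and `θ` is a quartic Gaussian period `η`, or `1 + η`. The four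
periods lie over the quadratic Gauss sum, and `θ * conj θ = n` forces `p = 1 + 4 * a ^ 2` or
`p = 9 + 4 * a ^ 2`, that is `q = a ^ 2` or `q = a ^ 2 + 2`. The first contradicts the primality
of `q`, and the second makes `3` divide `p` or `q`.
-/

open Finset NumberField
open scoped Pointwise

section DifferenceSet

variable {G : Type*} [AddCommGroup G] [DecidableEq G]

theorem card_filter_snd_sub_fst_eq (A B : Finset G) (g : G) :
    #{x ∈ A ×ˢ B | x.2 - x.1 = g} = #(B ∩ (g +ᵥ A)) := by
  refine card_bij' (fun x _ ↦ x.2) (fun b _ ↦ (b - g, b)) ?_ ?_ ?_ ?_ <;>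
    simp +contextual [← neg_vadd_mem_iff, neg_add_eq_sub, eq_comm]

theorem sum_sum_apply_sub [Fintype G] {M : Type*} [AddCommMonoid M] (A B : Finset G) (f : G → M) :
    ∑ a ∈ A, ∑ b ∈ B, f (b - a) = ∑ g, #(B ∩ (g +ᵥ A)) • f g := by
  rw [← sum_product', ← sum_fiberwise _ (fun x ↦ x.2 - x.1)]
  refine sum_congr rfl fun g _ ↦ ?_
  rw [← card_filter_snd_sub_fst_eq, ← sum_const]
  exact sum_congr rfl fun x hx ↦ by rw [(mem_filter.1 hx).2]

theorem sum_card_inter_vadd [Fintype G] (A B : Finset G) :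
    ∑ g : G, #(B ∩ (g +ᵥ A)) = #A * #B := by
  simpa using! (sum_sum_apply_sub A B fun _ ↦ (1 : ℕ)).symm

theorem smul_finset_vadd {U : Type*} [Group U] [DistribMulAction U G] (u : U) (g : G)
    (D : Finset G) : u • (g +ᵥ D) = (u • g) +ᵥ (u • D) := by
  ext x
  simp [← neg_vadd_mem_iff, ← inv_smul_mem_iff]

/-- `D` is a difference set with parameter `lam` in the group `G`. Representations `g = b - a` with
`a, b ∈ D` are counted as elements `b ∈ D ∩ (g + D)`, and `lam = 0` is allowed, so that complements
of difference sets are difference sets. -/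
def IsDifferenceSet (D : Finset G) (lam : ℕ) : Prop :=
  ∀ g : G, g ≠ 0 → #(D ∩ (g +ᵥ D)) = lam

theorem IsDiffSetZMod.isDifferenceSet {p lam : ℕ} {D : Finset (ZMod p)}
    (hD : IsDiffSetZMod p D lam) : IsDifferenceSet D lam :=
  fun g hg ↦ card_filter_snd_sub_fst_eq D D g ▸ hD.2 g hg

namespace IsDifferenceSet

variable {D : Finset G} {lam n : ℕ}

theorem sum_card_inter_smul [Fintype G] {R : Type*} [CommRing R] (hD : IsDifferenceSet D lam)
    (f : G → R) : ∑ g, #(D ∩ (g +ᵥ D)) • f g = (#D - lam) * f 0 + lam * ∑ g, f g := by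
  rw [← add_sum_erase _ _ (mem_univ 0), ← add_sum_erase univ f (mem_univ 0),
    sum_congr rfl fun g hg ↦ by rw [hD g (ne_of_mem_erase hg)], ← smul_sum]
  simp only [zero_vadd, inter_self, nsmul_eq_mul]
  ring

theorem card_sq [Fintype G] (hD : IsDifferenceSet D lam) :
    (#D : ℤ) ^ 2 = #D - lam + lam * Fintype.card G := by
  have h := hD.sum_card_inter_smul fun _ ↦ (1 : ℤ)
  simp only [nsmul_eq_mul, mul_one, sum_const, card_univ] at h
  rw [← h, sq]
  exact_mod_cast (sum_card_inter_vadd D D).symm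

theorem vadd (hD : IsDifferenceSet D lam) (s : G) : IsDifferenceSet (s +ᵥ D) lam := fun g hg ↦ by
  rw [vadd_comm, ← vadd_finset_inter, card_vadd_finset, hD g hg]

theorem smul {U : Type*} [Group U] [DistribMulAction U G] (hD : IsDifferenceSet D lam) (u : U) :
    IsDifferenceSet (u • D) lam := fun g hg ↦ by
  have h : g +ᵥ u • D = u • ((u⁻¹ • g) +ᵥ D) := by rw [smul_finset_vadd, smul_inv_smul]
  rw [h, ← smul_finset_inter, card_smul_finset, hD _ ((smul_ne_zero_iff_ne _).2 hg)]

theorem compl [Fintype G] (hD : IsDifferenceSet D lam) :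
    IsDifferenceSet Dᶜ (Fintype.card G + lam - 2 * #D) := fun g hg ↦ by
  have hcompl : g +ᵥ Dᶜ = (g +ᵥ D)ᶜ := by
    ext x
    simp [← neg_vadd_mem_iff]
  have hunion := card_union_add_card_inter D (g +ᵥ D)
  rw [hD g hg, card_vadd_finset] at hunion
  have := card_le_univ (D ∪ (g +ᵥ D))
  rw [hcompl, ← compl_union, card_compl]
  omega

/-- All the counts are at least `lam`, and one of them is larger, hence at least `lam + n = #D`. -/
theorem exists_eq_vadd_of_dvd [Finite G] (hD : IsDifferenceSet D lam) (hcard : #D = lam + n)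
    (hlam : lam < n) {S : Finset G} (hS : #S = #D)
    (hdvd : ∀ g : G, (n : ℤ) ∣ #(S ∩ (g +ᵥ D)) - lam) : ∃ g : G, S = g +ᵥ D := by
  cases nonempty_fintype G
  have hge (g : G) : lam ≤ #(S ∩ (g +ᵥ D)) := by
    by_contra! hlt
    have := Int.le_of_dvd (by omega) ((dvd_neg.2 (hdvd g)).trans (neg_sub _ _).dvd)
    omega
  obtain ⟨g, hg⟩ : ∃ g : G, lam < #(S ∩ (g +ᵥ D)) := by
    by_contra! hle
    have hsum := sum_card_inter_vadd D S
    rw [sum_congr rfl fun g _ ↦ (hle g).antisymm (hge g), sum_const, card_univ, smul_eq_mul, hS]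
      at hsum
    have hsq := hD.card_sq
    have : (#D * #D : ℤ) = Fintype.card G * lam := by exact_mod_cast hsum.symm
    grind
  have hn : n ≤ #(S ∩ (g +ᵥ D)) - lam := by
    have := Int.le_of_dvd (by omega) (hdvd g)
    omega
  have hSD : S ∩ (g +ᵥ D) = S := eq_of_subset_of_card_le inter_subset_left (by omega)
  exact ⟨g, eq_of_subset_of_card_le (inter_eq_left.1 hSD) (by rw [card_vadd_finset, hS])⟩

end IsDifferenceSet

end DifferenceSet

section CharacterSum

variable {F O : Type*} [CommRing O]

/-- The sum of the values of the additive character `e` on the finite set `D`. -/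
def charSum [AddMonoid F] (e : AddChar F O) (D : Finset F) : O :=
  ∑ d ∈ D, e d

/-- `e` intertwines the multiplication action of the units of `F` with a given action on its values,
as the characters of `ZMod p` do for the Galois action on `p`-th roots of unity. -/
def IsUnitsEquivariant [CommRing F] [SMul Fˣ O] (e : AddChar F O) : Prop :=
  ∀ (u : Fˣ) (x : F), u • e x = e (u • x)

section Ring

variable [CommRing F] [DecidableEq F] [MulSemiringAction Fˣ O] {e : AddChar F O}

theorem IsUnitsEquivariant.smul_charSum (hequiv : IsUnitsEquivariant e) (u : Fˣ) (D : Finset F) :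
    u • charSum e D = charSum e (u • D) := by
  rw [charSum, charSum, smul_finset_def, sum_image (MulAction.injective u).injOn, smul_sum]
  exact sum_congr rfl fun d _ ↦ hequiv u d

theorem IsUnitsEquivariant.charSum_mul_neg_one_smul_charSum [Fintype F]
    (hequiv : IsUnitsEquivariant e) (A B : Finset F) :
    charSum e B * ((-1 : Fˣ) • charSum e A) = ∑ g, #(B ∩ (g +ᵥ A)) • e g := by
  rw [← sum_sum_apply_sub, mul_comm, charSum, charSum, smul_sum, sum_mul_sum]
  refine sum_congr rfl fun a _ ↦ sum_congr rfl fun b _ ↦ ?_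
  rw [hequiv, ← e.map_add_eq_mul, Units.neg_smul, one_smul, neg_add_eq_sub]

theorem IsDifferenceSet.charSum_mul_neg_one_smul_charSum [Finite F] [IsDomain O]
    {D : Finset F} {lam : ℕ} (hD : IsDifferenceSet D lam)
    (hequiv : IsUnitsEquivariant e) (he : e ≠ 1) :
    charSum e D * ((-1 : Fˣ) • charSum e D) = #D - lam := by
  cases nonempty_fintype F
  rw [hequiv.charSum_mul_neg_one_smul_charSum, hD.sum_card_inter_smul,
    AddChar.sum_eq_zero_of_ne_one he, e.map_zero_eq_one, mul_one, mul_zero, add_zero]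

end Ring

theorem smul_intCast {U : Type*} [Monoid U] [MulSemiringAction U O] (u : U) (z : ℤ) :
    u • (z : O) = z :=
  map_intCast (MulSemiringAction.toRingHom U O u) z

theorem dvd_of_intCast_dvd_intCast {U : Type*} [Group U] [IsDomain O] [CharZero O]
    [MulSemiringAction U O] [Algebra.IsInvariant ℤ O U] {n m : ℤ} (h : (n : O) ∣ m) : n ∣ m := by
  rcases eq_or_ne n 0 with rfl | hn
  · simpa using h
  obtain ⟨w, hw⟩ := h
  obtain ⟨a, rfl⟩ := Algebra.IsInvariant.isInvariant (A := ℤ) (G := U) w fun u ↦ by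
    refine mul_left_cancel₀ (Int.cast_ne_zero.2 hn) ?_
    rw [← hw, ← smul_intCast u n, ← smul_mul', ← hw, smul_intCast]
  exact ⟨a, by rw [eq_intCast] at hw; exact_mod_cast hw⟩

section Field

variable [Field F] [Fintype F] [IsDomain O] {e : AddChar F O}

theorem sum_units_smul_addChar [DecidableEq F] (he : e ≠ 1) (a : F) :
    ∑ u : Fˣ, e (u • a) = Fintype.card F * (if a = 0 then 1 else 0) - 1 := by
  have h := AddChar.sum_mulShift a (AddChar.IsPrimitive.of_ne_one he)
  rw [← add_sum_erase _ _ (mem_univ 0), zero_mul, e.map_zero_eq_one] at h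
  push_cast at h
  rw [mul_ite, mul_one, mul_zero, ← h, add_sub_cancel_left]
  refine sum_bij (fun u _ ↦ (u : F)) (by simp) (fun u _ v _ ↦ Units.ext) ?_ fun u _ ↦ rfl
  exact fun x hx ↦ ⟨Units.mk0 x (ne_of_mem_erase hx), mem_univ _, rfl⟩

/-- Fourier inversion, integrally: the trace of `e (-g) * ∑ x, f x • e x` is
`card F * f g - ∑ x, f x`. -/
theorem IsUnitsEquivariant.dvd_card_mul_sub_sum [CharZero O] [MulSemiringAction Fˣ O]
    [Algebra.IsInvariant ℤ O Fˣ] (hequiv : IsUnitsEquivariant e) (he : e ≠ 1) {n : ℤ} {f : F → ℤ}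
    (hdvd : (n : O) ∣ ∑ x, f x • e x) (g : F) : n ∣ Fintype.card F * f g - ∑ x, f x := by
  classical
  have htrace : ∑ u : Fˣ, u • (e (-g) * ∑ x, f x • e x) =
      ((Fintype.card F * f g - ∑ x, f x : ℤ) : O) := by
    simp_rw [mul_sum, smul_sum, mul_smul_comm, ← e.map_add_eq_mul, smul_comm _ (f _), hequiv _ _]
    rw [sum_comm]
    simp_rw [← smul_sum, sum_units_smul_addChar he, neg_add_eq_zero]
    simp [mul_sub, mul_comm]
  apply dvd_of_intCast_dvd_intCast (O := O) (U := Fˣ)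
  rw [← htrace]
  refine dvd_sum fun u _ ↦ ?_
  obtain ⟨w, hw⟩ := hdvd
  rw [hw, mul_left_comm, smul_mul', smul_intCast]
  exact dvd_mul_right _ _

end Field

end CharacterSum

section DedekindDomain

variable {U O : Type*} [CommRing O]

theorem exists_prime_dvd_natCast_mem (P : Ideal O) [P.IsPrime] {n : ℕ} (hn : n ≠ 0)
    (h : (n : O) ∈ P) : ∃ r, r.Prime ∧ r ∣ n ∧ (r : O) ∈ P := by
  rw [← Nat.prod_primeFactorsList hn, Nat.cast_list_prod, ← Multiset.prod_coe,
    Ideal.IsPrime.multiset_prod_mem_iff_exists_mem ‹_›] at h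
  simpa [Nat.mem_primeFactorsList hn, and_assoc] using h

theorem emultiplicity_smul_smul [Group U] [MulSemiringAction U O] (u : U) (P I : Ideal O) :
    emultiplicity (u • P) (u • I) = emultiplicity P I :=
  emultiplicity_map_eq (MulDistribMulAction.toMulEquiv (Ideal O) u)

/-- At a prime fixed by `c`, the ideals `I` and `t • I` both have half the multiplicity of `J`. -/
theorem smul_eq_self_of_mul_smul_eq [IsDedekindDomain O] [CommGroup U] [MulSemiringAction U O]
    {c t : U} {I J : Ideal O} (hI : I * c • I = J) (hJ : J ≠ ⊥) (ht : t • J = J)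
    (hP : ∀ P : Ideal O, P.IsPrime → J ≤ P → t • P = P ∨ c • P = P) : t • I = I := by
  have htI : t • I * c • t • I = J := by rw [smul_comm c t, ← smul_mul', hI, ht]
  have hI0 : I ≠ ⊥ := by rintro rfl; simp [← hI] at hJ
  have htI0 : t • I ≠ ⊥ := by intro h; simp [← htI, h] at hJ
  have hmult (P : Ideal O) (hprime : Prime P) : emultiplicity P (t • I) = emultiplicity P I := by
    by_cases hPJ : P ∣ J
    · rcases hP P (Ideal.isPrime_of_prime hprime) (Ideal.le_of_dvd hPJ) with htP | hcP
      · rw [← emultiplicity_smul_smul t P I, htP]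
      · have hhalf (K : Ideal O) (hK : K * c • K = J) :
            emultiplicity P J = 2 * emultiplicity P K := by
          have hcK : emultiplicity P (c • K) = emultiplicity P K := by
            rw [← emultiplicity_smul_smul c P K, hcP]
          rw [← hK, emultiplicity_mul hprime, hcK, two_mul]
        exact (ENat.mul_right_strictMono two_ne_zero (ENat.natCast_ne_top 2)).injective
          ((hhalf (t • I) htI).symm.trans (hhalf I hI))
    · rw [emultiplicity_eq_zero.2 fun h ↦ hPJ (h.trans ⟨_, htI.symm⟩),
        emultiplicity_eq_zero.2 fun h ↦ hPJ (h.trans ⟨_, hI.symm⟩)]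
  exact dvd_antisymm
    ((UniqueFactorizationMonoid.dvd_iff_emultiplicity_le htI0).2 fun P h ↦ (hmult P h).le)
    ((UniqueFactorizationMonoid.dvd_iff_emultiplicity_le hI0).2 fun P h ↦ (hmult P h).ge)

theorem dvd_smul_mul_smul_of_mul_smul_eq [IsDedekindDomain O] [CharZero O] [CommGroup U]
    [MulSemiringAction U O]
    {c t : U} {θ : O} {n : ℤ} (hn : n ≠ 0) (hθ : θ * c • θ = n)
    (hP : ∀ P : Ideal O, P.IsPrime → (n : O) ∈ P → t • P = P ∨ c • P = P) :
    (n : O) ∣ t • θ * c • θ := by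
  have smul_span (u : U) (x : O) : u • Ideal.span {x} = Ideal.span {u • x} := by
    rw [Ideal.smul_closure, Set.smul_set_singleton]
  have hspan : t • Ideal.span {θ} = Ideal.span {θ} := by
    refine smul_eq_self_of_mul_smul_eq (c := c) (J := Ideal.span {(n : O)}) ?_ ?_ ?_ fun P hPr hnP ↦
      hP P hPr ((Ideal.span_singleton_le_iff_mem P).1 hnP)
    · rw [smul_span, Ideal.span_singleton_mul_span_singleton, hθ]
    · simpa using hn
    · rw [smul_span, smul_intCast]
  rw [← hθ]
  rw [smul_span] at hspan
  exact mul_dvd_mul_right (Ideal.span_singleton_le_span_singleton.1 hspan.le) _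

end DedekindDomain

section Cyclotomic

variable (p : ℕ) [Fact p.Prime] (K : Type*) [Field K] [NumberField K]
  [IsCyclotomicExtension {p} ℚ K]

/-- The Galois action on `𝓞 K`, for the `p`-th cyclotomic field `K`, with the Galois group
identified with `(ZMod p)ˣ`. -/
@[reducible]
noncomputable def cyclotomicUnitsAction : MulSemiringAction (ZMod p)ˣ (𝓞 K) :=
  MulSemiringAction.compHom (𝓞 K) (IsCyclotomicExtension.Rat.galEquivZMod p K).symm.toMonoidHom

attribute [local instance] cyclotomicUnitsAction

variable {K} in
theorem cyclotomic_smul_def (u : (ZMod p)ˣ) (x : 𝓞 K) :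
    u • x = (IsCyclotomicExtension.Rat.galEquivZMod p K).symm u • x := rfl

instance cyclotomicUnits_isInvariant : Algebra.IsInvariant ℤ (𝓞 K) (ZMod p)ˣ := by
  have : IsGalois ℚ K := IsCyclotomicExtension.isGalois {p} ℚ K
  refine ⟨fun b hb ↦ Algebra.IsInvariant.isInvariant (G := Gal(K/ℚ)) b fun σ ↦ ?_⟩
  have := hb (IsCyclotomicExtension.Rat.galEquivZMod p K σ)
  rwa [cyclotomic_smul_def, MulEquiv.symm_apply_apply] at this

/-- The additive character `x ↦ ζ ^ x` of `ZMod p` with values in the ring of integers of the `p`-th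
cyclotomic field, for the chosen primitive `p`-th root of unity `ζ`. -/
noncomputable def cyclotomicAddChar : AddChar (ZMod p) (𝓞 K) :=
  AddChar.zmodChar p (IsCyclotomicExtension.zeta_spec p ℚ K).toInteger_isPrimitiveRoot.pow_eq_one

theorem cyclotomicAddChar_ne_one : cyclotomicAddChar p K ≠ 1 := by
  rw [← AddChar.mulShift_one (cyclotomicAddChar p K)]
  exact AddChar.zmodChar_primitive_of_primitive_root p
    (IsCyclotomicExtension.zeta_spec p ℚ K).toInteger_isPrimitiveRoot one_ne_zero

theorem cyclotomicAddChar_isUnitsEquivariant : IsUnitsEquivariant (cyclotomicAddChar p K) := by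
  intro u x
  have hζ := (IsCyclotomicExtension.zeta_spec p ℚ K).toInteger_isPrimitiveRoot.pow_eq_one
  rw [cyclotomic_smul_def, cyclotomicAddChar, AddChar.zmodChar_apply, AddChar.zmodChar_apply,
    smul_pow', IsCyclotomicExtension.Rat.galEquivZMod_smul_of_pow_eq p K _ hζ,
    MulEquiv.apply_symm_apply, ← pow_mul, Units.smul_def, smul_eq_mul, ZMod.val_mul,
    ← pow_eq_pow_mod _ hζ]

variable {p K}

/-- The decomposition group of a prime above `r ≠ p` is generated by the Frobenius at `r`. -/
theorem smul_ideal_eq_of_mem_zpowers_unitOfCoprime {r : ℕ} (hr : r.Prime) (hrp : r.Coprime p)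
    {P : Ideal (𝓞 K)} [hP : P.IsPrime] (hrP : (r : 𝓞 K) ∈ P) {u : (ZMod p)ˣ}
    (hu : u ∈ Subgroup.zpowers (ZMod.unitOfCoprime r hrp)) : u • P = P := by
  have : Fact r.Prime := ⟨hr⟩
  have hunder : Ideal.span {(r : ℤ)} = P.under ℤ := by
    refine (Int.ideal_span_isMaximal_of_prime r).eq_of_le (Ideal.IsPrime.under ℤ P).ne_top ?_
    rw [Ideal.span_singleton_le_iff_mem, Ideal.mem_comap]
    simpa using hrP
  have : P.LiesOver (Ideal.span {(r : ℤ)}) := ⟨hunder⟩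
  have : P.IsMaximal := hP.isMaximal (by
    rintro rfl
    exact hr.ne_zero (by exact_mod_cast (Ideal.mem_bot.1 hrP)))
  rw [← IsCyclotomicExtension.Rat.galEquivZMod_stabilizer p K r P hrp] at hu
  obtain ⟨σ, hσ, rfl⟩ := hu
  change (IsCyclotomicExtension.Rat.galEquivZMod p K).symm
    (IsCyclotomicExtension.Rat.galEquivZMod p K σ) • P = P
  rwa [MulEquiv.symm_apply_apply]

end Cyclotomic

section Multiplier

variable {p : ℕ} [Fact p.Prime]

attribute [local instance] cyclotomicUnitsAction

theorem IsDifferenceSet.dvd_charSum_mul {K : Type*} [Field K] [NumberField K]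
    [IsCyclotomicExtension {p} ℚ K] {D : Finset (ZMod p)} {lam n : ℕ}
    (hD : IsDifferenceSet D lam) (hcard : #D = lam + n) (hn : n ≠ 0) (hnp : n.Coprime p)
    {t : (ZMod p)ˣ}
    (ht : ∀ r (hrp : Nat.Coprime r p), r.Prime → r ∣ n →
      t ∈ Subgroup.zpowers (ZMod.unitOfCoprime r hrp) ∨
      -1 ∈ Subgroup.zpowers (ZMod.unitOfCoprime r hrp)) :
    (n : 𝓞 K) ∣ ∑ g, #((t • D) ∩ (g +ᵥ D)) • cyclotomicAddChar p K g := by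
  have hequiv := cyclotomicAddChar_isUnitsEquivariant p K
  have hnorm := hD.charSum_mul_neg_one_smul_charSum hequiv (cyclotomicAddChar_ne_one p K)
  rw [← hequiv.charSum_mul_neg_one_smul_charSum, ← hequiv.smul_charSum, ← Int.cast_natCast]
  refine dvd_smul_mul_smul_of_mul_smul_eq (by exact_mod_cast hn) ?_ fun P hP hnP ↦ ?_
  · rw [hnorm, hcard]
    push_cast
    ring
  · obtain ⟨r, hr, hrn, hrP⟩ := exists_prime_dvd_natCast_mem P hn (by exact_mod_cast hnP)
    have hrp := hnp.coprime_dvd_left hrn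
    exact (ht r hrp hr hrn).imp (smul_ideal_eq_of_mem_zpowers_unitOfCoprime hr hrp hrP)
      (smul_ideal_eq_of_mem_zpowers_unitOfCoprime hr hrp hrP)

/-- `t` fixes `charSum e D` up to a unit, because it or complex conjugation fixes each prime ideal
that divides `n`. -/
theorem IsDifferenceSet.exists_smul_eq_vadd {D : Finset (ZMod p)} {lam n : ℕ}
    (hD : IsDifferenceSet D lam) (hcard : #D = lam + n) (hlam : lam < n) (hnp : n.Coprime p)
    {t : (ZMod p)ˣ}
    (ht : ∀ r (hrp : Nat.Coprime r p), r.Prime → r ∣ n →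
      t ∈ Subgroup.zpowers (ZMod.unitOfCoprime r hrp) ∨
      -1 ∈ Subgroup.zpowers (ZMod.unitOfCoprime r hrp)) :
    ∃ g : ZMod p, t • D = g +ᵥ D := by
  have : NeZero (p : ℚ) := NeZero.charZero
  have : IsCyclotomicExtension {p} ℚ (CyclotomicField p ℚ) :=
    CyclotomicField.isCyclotomicExtension p ℚ
  refine hD.exists_eq_vadd_of_dvd hcard hlam (card_smul_finset t D) fun g ↦ ?_
  have hdvd := hD.dvd_charSum_mul (K := CyclotomicField p ℚ) hcard (by omega) hnp ht
  have htrace : (n : ℤ) ∣ Fintype.card (ZMod p) * #((t • D) ∩ (g +ᵥ D)) -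
      ∑ x : ZMod p, (#((t • D) ∩ (x +ᵥ D)) : ℤ) := by
    refine IsUnitsEquivariant.dvd_card_mul_sub_sum (f := fun x ↦ #((t • D) ∩ (x +ᵥ D)))
      (cyclotomicAddChar_isUnitsEquivariant p (CyclotomicField p ℚ))
      (cyclotomicAddChar_ne_one p (CyclotomicField p ℚ)) ?_ g
    simpa only [natCast_zsmul, Int.cast_natCast] using hdvd
  have hcount : ∑ x : ZMod p, (#((t • D) ∩ (x +ᵥ D)) : ℤ) = n + lam * p := by
    rw [← Nat.cast_sum, sum_card_inter_vadd, card_smul_finset, Nat.cast_mul, ← sq, hD.card_sq,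
      ZMod.card, hcard]
    push_cast
    ring
  rw [hcount, ZMod.card] at htrace
  refine (Nat.isCoprime_iff_coprime.2 hnp).dvd_of_dvd_mul_left ?_
  convert dvd_add htrace (dvd_refl (n : ℤ)) using 1
  ring

theorem exists_smul_vadd_eq_self {F : Type*} [Field F] [DecidableEq F] {t : Fˣ} (ht : t ≠ 1)
    {D : Finset F} {g : F} (h : t • D = g +ᵥ D) : ∃ s : F, t • (s +ᵥ D) = s +ᵥ D := by
  refine ⟨g / (1 - t), ?_⟩
  rw [smul_finset_vadd, h, vadd_vadd, Units.smul_def, smul_eq_mul]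
  have : 1 - (t : F) ≠ 0 := sub_ne_zero.2 (Ne.symm (mt Units.val_eq_one.1 ht))
  congr 1
  field_simp
  ring

end Multiplier

section UnitGroup

variable {R : Type*} [CommRing R] [IsDomain R] [Finite Rˣ] {t u : Rˣ}

theorem mem_zpowers_of_orderOf_dvd (h : orderOf t ∣ orderOf u) : t ∈ Subgroup.zpowers u := by
  have : NeZero (orderOf u) := ⟨(orderOf_pos u).ne'⟩
  rw [(IsPrimitiveRoot.orderOf u).zpowers_eq, mem_rootsOfUnity, ← orderOf_dvd_iff_pow_eq_one]
  exact h

theorem mem_zpowers_or_neg_one_mem_zpowers (hu : u ≠ 1)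
    (ht : ∀ r : ℕ, r.Prime → r ∣ Nat.card Rˣ → r = orderOf t ∨ r = 2) :
    t ∈ Subgroup.zpowers u ∨ -1 ∈ Subgroup.zpowers u := by
  obtain ⟨r, hr, hru⟩ := Nat.exists_prime_and_dvd (orderOf_eq_one_iff.not.2 hu)
  refine (ht r hr (hru.trans (orderOf_dvd_natCard u))).imp ?_ ?_ <;> rintro rfl <;>
    apply mem_zpowers_of_orderOf_dvd
  · exact hru
  · exact (orderOf_dvd_of_pow_eq_one neg_one_sq).trans hru

end UnitGroup

section GaussianPeriods

variable {F O : Type*} [Field F] [Fintype F] [DecidableEq F] [CommRing O] {e : AddChar F O}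

/-- The fibre of the `m`-th power map over `a`. When `m * k = card F - 1`, the nonempty fibres over
`a ≠ 0` are the cyclotomic classes of order `k`, whose character sums are the Gaussian periods. -/
def powFiber (m : ℕ) (a : F) : Finset F :=
  {x | x ^ m = a}

theorem mem_powFiber {m : ℕ} {a x : F} : x ∈ powFiber m a ↔ x ^ m = a :=
  mem_filter_univ x

theorem smul_powFiber (u : Fˣ) (m : ℕ) (a : F) : u • powFiber m a = powFiber m (u ^ m * a) := by
  ext x
  rw [← inv_smul_mem_iff, mem_powFiber, mem_powFiber, Units.smul_def, smul_eq_mul, mul_pow,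
    Units.val_inv_eq_inv_val, inv_pow, inv_mul_eq_iff_eq_mul₀ (pow_ne_zero m u.ne_zero)]

theorem charSum_powFiber_two_mul (h2 : ringChar F ≠ 2) {a : F} (ha : a ≠ 0) (m : ℕ) :
    charSum e (powFiber (2 * m) (a ^ 2)) =
      charSum e (powFiber m a) + charSum e (powFiber m (-a)) := by
  rw [charSum, charSum, charSum, ← sum_union]
  · congr 1
    ext x
    simp only [mem_union, mem_powFiber, mul_comm 2 m, pow_mul, sq_eq_sq_iff_eq_or_eq_neg]
  · rw [disjoint_left]
    intro x hx hx'
    rw [mem_powFiber] at hx hx'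
    exact ha ((Ring.eq_self_iff_eq_zero_of_char_ne_two h2).1 (hx' ▸ hx))

theorem gaussSum_quadraticChar_eq (h2 : ringChar F ≠ 2) :
    gaussSum ((quadraticChar F).ringHomComp (Int.castRingHom O)) e =
      charSum e (powFiber (Fintype.card F / 2) 1) -
        charSum e (powFiber (Fintype.card F / 2) (-1)) := by
  have hne : (1 : F) ≠ -1 := (Ring.neg_one_ne_one_of_char_ne_two h2).symm
  rw [charSum, charSum, powFiber, powFiber, sum_filter, sum_filter, ← sum_sub_distrib, gaussSum]
  refine sum_congr rfl fun x _ ↦ ?_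
  rw [MulChar.ringHomComp_apply, ← quadraticChar_eq_pow_of_char_ne_two' h2]
  rcases eq_or_ne x 0 with rfl | hx
  · simp
  · rcases quadraticChar_dichotomy hx with h | h <;> simp [h, hne, hne.symm]

variable [IsDomain O]

theorem charSum_powFiber_card_sub_one (he : e ≠ 1) :
    charSum e (powFiber (Fintype.card F - 1) 1) = -1 := by
  have h : powFiber (Fintype.card F - 1) (1 : F) = univ.erase 0 := by
    ext x
    rw [mem_powFiber, mem_erase, and_iff_left (mem_univ x)]
    refine ⟨?_, FiniteField.pow_card_sub_one_eq_one x⟩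
    rintro hx rfl
    simp [zero_pow (Nat.sub_ne_zero_of_lt Fintype.one_lt_card)] at hx
  rw [h, charSum, eq_neg_iff_add_eq_zero, ← AddChar.sum_eq_zero_of_ne_one he,
    ← sum_erase_add _ _ (mem_univ 0), e.map_zero_eq_one]

theorem charSum_powFiber_card_div_two_add (h2 : ringChar F ≠ 2) (he : e ≠ 1) :
    charSum e (powFiber (Fintype.card F / 2) 1) +
      charSum e (powFiber (Fintype.card F / 2) (-1)) = -1 := by
  rw [← charSum_powFiber_two_mul h2 one_ne_zero, one_pow, ← charSum_powFiber_card_sub_one he]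
  have := FiniteField.odd_card_of_char_ne_two h2
  congr 2
  omega

theorem two_mul_charSum_powFiber_add_one_sq [CharZero O] (hF : Fintype.card F % 4 = 1)
    (he : e ≠ 1) : (2 * charSum e (powFiber (Fintype.card F / 2) 1) + 1) ^ 2 = Fintype.card F := by
  have h2 : ringChar F ≠ 2 := fun h ↦ by
    have := FiniteField.even_card_iff_char_two.1 h
    omega
  have hgauss := gaussSum_sq (χ := (quadraticChar F).ringHomComp (Int.castRingHom O))
    ((MulChar.ringHomComp_ne_one_iff (RingHom.injective_int _)).2 (quadraticChar_ne_one h2))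
    ((quadraticChar_isQuadratic F).comp _) (AddChar.IsPrimitive.of_ne_one he)
  rw [gaussSum_quadraticChar_eq h2, MulChar.ringHomComp_apply, quadraticChar_neg_one h2,
    ZMod.χ₄_nat_one_mod_four hF, map_one, one_mul] at hgauss
  rw [← hgauss, eq_sub_of_add_eq' (charSum_powFiber_card_div_two_add h2 he)]
  ring

end GaussianPeriods

section QuarticPeriods

theorem exists_intCast_eq_of_smul_eq {U O : Type*} [CommRing O] [Group U] [MulSemiringAction U O]
    [Algebra.IsInvariant ℤ O U] {γ : U} (hγ : ∀ u, u ∈ Subgroup.zpowers γ) {b : O}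
    (hb : γ • b = b) : ∃ a : ℤ, (a : O) = b :=
  Algebra.IsInvariant.isInvariant (G := U) b fun u ↦
    (Subgroup.zpowers_le.2 (show γ ∈ MulAction.stabilizer U b from hb)) (hγ u)

theorem exists_generator_pow_sq_eq_neg_one {F : Type*} [Field F] [Fintype F] {q : ℕ}
    (hF : Fintype.card F = 4 * q + 1) :
    ∃ γ : Fˣ, (∀ u, u ∈ Subgroup.zpowers γ) ∧ ((γ : F) ^ q) ^ 2 = -1 := by
  obtain ⟨γ, hγ⟩ := IsCyclic.exists_generator (α := Fˣ)
  have hq : 0 < q := by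
    have := Fintype.one_lt_card (α := F)
    omega
  have horder : orderOf γ = q * 2 * 2 := by
    rw [orderOf_eq_card_of_forall_mem_zpowers hγ, Nat.card_units, Nat.card_eq_fintype_card, hF]
    omega
  have hroot := (IsPrimitiveRoot.orderOf γ).pow (orderOf_pos γ) horder
  refine ⟨γ, hγ, ?_⟩
  rw [← pow_mul]
  exact_mod_cast (IsPrimitiveRoot.coe_units_iff.2 hroot).eq_neg_one_of_two_right

/-- The conditions are those satisfied by the four quartic periods `x, z, y, w` modulo `p`. -/
theorem four_mul_sq_eq_of_quartic {O : Type*} [CommRing O] [IsDomain O] [CharZero O]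
    {x y z w s p m n : O} (hxy : 2 * (x + y) + 1 = s) (hzw : 2 * (z + w) + 1 = -s) (hs : s ^ 2 = p)
    (hn : 16 * n = 3 * p + (4 * m - 1) ^ 2) (hmxy : (m + x) * (m + y) = n)
    (hmzw : (m + z) * (m + w) = n) :
    4 * ((x - y) * (z - w) * s) ^ 2 = p ^ 2 * (p - (4 * m - 1) ^ 2) := by
  have discr {x y s : O} (hxy : 2 * (x + y) + 1 = s) (hs : s ^ 2 = p)
      (hmxy : (m + x) * (m + y) = n) : 2 * (x - y) ^ 2 = (4 * m - 1) * s - p := by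
    refine mul_left_cancel₀ (two_ne_zero (α := O)) ?_
    subst hxy
    linear_combination hs - hn - 16 * hmxy
  calc 4 * ((x - y) * (z - w) * s) ^ 2 = 2 * (x - y) ^ 2 * (2 * (z - w) ^ 2) * s ^ 2 := by ring
    _ = p ^ 2 * (p - (4 * m - 1) ^ 2) := by
      rw [discr hxy hs hmxy, discr hzw (by rw [neg_sq, hs]) hmzw]
      linear_combination (p ^ 2 - (4 * m - 1) ^ 2 * (s ^ 2 + p)) * hs

theorem exists_eq_sq_add_four_mul_sq_of_dvd {p b c : ℤ} (hp : Prime p) (hp4 : p % 4 = 1)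
    (hc : Odd c) (h : 4 * b ^ 2 = p ^ 2 * (p - c ^ 2)) : ∃ a : ℤ, p = c ^ 2 + 4 * a ^ 2 := by
  obtain ⟨d, hd⟩ : p ∣ 2 * b :=
    hp.dvd_of_dvd_pow (n := 2) ⟨p * (p - c ^ 2), by linear_combination h⟩
  have hd2 : d ^ 2 = p - c ^ 2 := by
    refine mul_left_cancel₀ (pow_ne_zero 2 hp.ne_zero) ?_
    rw [← h, ← mul_pow, ← hd]
    ring
  have hp2 : Odd p := Int.odd_iff.2 (by omega)
  have heven : Even (d ^ 2) := hd2 ▸ hp2.sub_odd hc.pow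
  obtain ⟨a, rfl⟩ := (Int.even_pow.1 heven).1
  exact ⟨a, by linear_combination -hd2⟩

section

variable {F O : Type*} [Field F] [Fintype F] [DecidableEq F] [CommRing O] {e : AddChar F O}

theorem IsUnitsEquivariant.smul_charSum_powFiber [MulSemiringAction Fˣ O]
    (hequiv : IsUnitsEquivariant e) (u : Fˣ) (m : ℕ) (a : F) :
    u • charSum e (powFiber m a) = charSum e (powFiber m (u ^ m * a)) := by
  rw [hequiv.smul_charSum, smul_powFiber]

theorem charSum_powFiber_quartic [IsDomain O] [CharZero O] {q : ℕ}
    (hF : Fintype.card F = 4 * q + 1) (he : e ≠ 1) {i : F} (hi : i ^ 2 = -1) :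
    (2 * (charSum e (powFiber q 1) + charSum e (powFiber q (-1))) + 1) ^ 2 = Fintype.card F ∧
      2 * (charSum e (powFiber q i) + charSum e (powFiber q (-i))) + 1 =
        -(2 * (charSum e (powFiber q 1) + charSum e (powFiber q (-1))) + 1) := by
  have h2 : ringChar F ≠ 2 := fun h ↦ by
    have := FiniteField.even_card_iff_char_two.1 h
    omega
  have hi0 : i ≠ 0 := by
    rintro rfl
    simp at hi
  have hhalf : Fintype.card F / 2 = 2 * q := by omega
  rw [← charSum_powFiber_two_mul h2 one_ne_zero, ← charSum_powFiber_two_mul h2 hi0, hi, one_pow,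
    ← hhalf]
  refine ⟨two_mul_charSum_powFiber_add_one_sq (by omega) he, ?_⟩
  linear_combination 2 * charSum_powFiber_card_div_two_add h2 he

end

theorem exists_eq_sq_add_four_mul_sq_of_charSum {p q : ℕ} [Fact p.Prime] (hpq : p = 4 * q + 1)
    {O : Type*} [CommRing O] [IsDomain O] [CharZero O] [MulSemiringAction (ZMod p)ˣ O]
    [Algebra.IsInvariant ℤ O (ZMod p)ˣ] {e : AddChar (ZMod p) O} (hequiv : IsUnitsEquivariant e)
    (he : e ≠ 1) {m n : ℤ} (hn : 16 * n = 3 * p + (4 * m - 1) ^ 2)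
    (hprod : (m + charSum e (powFiber q 1)) * (m + charSum e (powFiber q (-1))) = n) :
    ∃ a : ℤ, p = (4 * m - 1) ^ 2 + 4 * a ^ 2 := by
  have hF : Fintype.card (ZMod p) = 4 * q + 1 := (ZMod.card p).trans hpq
  obtain ⟨γ, hγ, hi⟩ := exists_generator_pow_sq_eq_neg_one hF
  obtain ⟨hsq, hsneg⟩ := charSum_powFiber_quartic hF he hi
  have hγone := hequiv.smul_charSum_powFiber γ q 1
  have hγneg := hequiv.smul_charSum_powFiber γ q (-1)
  have hγi := hequiv.smul_charSum_powFiber γ q (γ ^ q)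
  have hγnegi := hequiv.smul_charSum_powFiber γ q (-γ ^ q)
  rw [mul_one] at hγone
  rw [mul_neg_one] at hγneg
  rw [← sq, hi] at hγi
  rw [mul_neg, ← sq, hi, neg_neg] at hγnegi
  set i : ZMod p := (γ : ZMod p) ^ q
  set s := 2 * (charSum e (powFiber q 1) + charSum e (powFiber q (-1))) + 1 with hs
  have hγs : γ • s = -s := by
    rw [← hsneg, smul_add, smul_mul', smul_add, hγone, hγneg, smul_one, ← Int.cast_two,
      smul_intCast]
  obtain ⟨b, hb⟩ := exists_intCast_eq_of_smul_eq hγ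
    (b := (charSum e (powFiber q 1) - charSum e (powFiber q (-1))) *
      (charSum e (powFiber q i) - charSum e (powFiber q (-i))) * s) (by
        simp only [smul_mul', smul_sub, hγone, hγneg, hγi, hγnegi, hγs]
        ring)
  have hprod_i : (m + charSum e (powFiber q i)) * (m + charSum e (powFiber q (-i))) = n := by
    rw [← smul_intCast γ n, ← hprod, smul_mul', smul_add, smul_add, smul_intCast, hγone, hγneg]
  have hquartic := four_mul_sq_eq_of_quartic (p := (p : O)) hs.symm hsneg
    (by rw [hsq, ZMod.card]) (by exact_mod_cast hn) hprod hprod_i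
  rw [← hb] at hquartic
  exact exists_eq_sq_add_four_mul_sq_of_dvd (Nat.prime_iff_prime_int.1 Fact.out) (by omega)
    ⟨2 * m - 1, by ring⟩ (by exact_mod_cast hquartic)

end QuarticPeriods

section BiquadraticResidues

variable {p q lam : ℕ} [Fact p.Prime]

attribute [local instance] cyclotomicUnitsAction in
theorem IsDifferenceSet.exists_eq_sq_add_four_mul_sq {D : Finset (ZMod p)}
    (hD : IsDifferenceSet D lam) (hpq : p = 4 * q + 1) (hq : Odd q) {m : ℤ}
    (hcharSum : ∀ e : AddChar (ZMod p) (𝓞 (CyclotomicField p ℚ)),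
      charSum e D = m + charSum e (powFiber q 1))
    (hn : 16 * (#D - lam : ℤ) = 3 * p + (4 * m - 1) ^ 2) :
    ∃ a : ℤ, p = (4 * m - 1) ^ 2 + 4 * a ^ 2 := by
  have : NeZero (p : ℚ) := NeZero.charZero
  have : IsCyclotomicExtension {p} ℚ (CyclotomicField p ℚ) :=
    CyclotomicField.isCyclotomicExtension p ℚ
  have hequiv := cyclotomicAddChar_isUnitsEquivariant p (CyclotomicField p ℚ)
  have he := cyclotomicAddChar_ne_one p (CyclotomicField p ℚ)
  refine exists_eq_sq_add_four_mul_sq_of_charSum hpq hequiv he hn ?_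
  have hnorm := hD.charSum_mul_neg_one_smul_charSum hequiv he
  rw [hcharSum, smul_add, smul_intCast, hequiv.smul_charSum_powFiber, Units.val_neg,
    Units.val_one, hq.neg_one_pow, mul_one] at hnorm
  exact_mod_cast hnorm

theorem exists_units_isPrimitiveRoot {F : Type*} [Field F] [Fintype F]
    (hq : q ∣ Fintype.card F - 1) : ∃ t : Fˣ, IsPrimitiveRoot t q := by
  obtain ⟨γ, hγ⟩ := IsCyclic.exists_ofOrder_eq_natCard (α := Fˣ)
  obtain ⟨k, hk⟩ := hq
  rw [Nat.card_units, Nat.card_eq_fintype_card, hk, mul_comm] at hγ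
  exact ⟨γ ^ k, (IsPrimitiveRoot.orderOf γ).pow (orderOf_pos γ) hγ⟩

theorem card_powFiber_one {F : Type*} [Field F] [Fintype F] [DecidableEq F]
    (hq : q ∣ Fintype.card F - 1) : #(powFiber q (1 : F)) = q := by
  obtain ⟨t, ht⟩ := exists_units_isPrimitiveRoot hq
  have hpos : 0 < q := Nat.pos_of_dvd_of_pos hq (Nat.sub_pos_of_lt Fintype.one_lt_card)
  refine Eq.trans (congrArg card ?_) (IsPrimitiveRoot.coe_units_iff.2 ht).card_nthRootsFinset
  ext x
  rw [mem_powFiber, Polynomial.mem_nthRootsFinset hpos]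

/-- This is Chowla's criterion `p = 1 + 4 * a ^ 2`. -/
theorem IsDifferenceSet.isSquare_of_powFiber (hD : IsDifferenceSet (powFiber q (1 : ZMod p)) lam)
    (hpq : p = 4 * q + 1) : IsSquare (q : ℤ) := by
  have hcard := card_powFiber_one (F := ZMod p) (q := q) ⟨4, by rw [ZMod.card]; omega⟩
  have hq : (q : ℤ) ≠ 0 := by
    have := (Fact.out : p.Prime).ne_one
    omega
  have hsq := hD.card_sq
  rw [hcard, ZMod.card] at hsq
  have hlam : (q : ℤ) = 4 * lam + 1 := mul_left_cancel₀ hq (by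
    push_cast [hpq] at hsq
    linear_combination hsq)
  obtain ⟨a, ha⟩ := hD.exists_eq_sq_add_four_mul_sq (m := 0) hpq ⟨2 * lam, by omega⟩ (by simp)
    (by rw [hcard]; omega)
  exact ⟨a, by push_cast [hpq] at ha; linarith⟩

/-- This is Lehmer's criterion `p = 9 + 4 * a ^ 2`. -/
theorem IsDifferenceSet.exists_eq_sq_add_two_of_insert_zero_powFiber
    (hD : IsDifferenceSet (insert 0 (powFiber q (1 : ZMod p))) lam) (hpq : p = 4 * q + 1) :
    ∃ a : ℤ, q = a ^ 2 + 2 := by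
  have hq : (q : ℤ) ≠ 0 := by
    have := (Fact.out : p.Prime).ne_one
    omega
  have h0 : (0 : ZMod p) ∉ powFiber q 1 := by
    rw [mem_powFiber, zero_pow (by omega)]
    exact zero_ne_one
  have hcard : #(insert 0 (powFiber q (1 : ZMod p))) = q + 1 := by
    rw [card_insert_of_notMem h0, card_powFiber_one ⟨4, by rw [ZMod.card]; omega⟩]
  have hsq := hD.card_sq
  rw [hcard, ZMod.card] at hsq
  have hlam : (q : ℤ) + 1 = 4 * lam := mul_left_cancel₀ hq (by
    push_cast [hpq] at hsq
    linear_combination hsq)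
  obtain ⟨a, ha⟩ := hD.exists_eq_sq_add_four_mul_sq (m := 1) hpq ⟨2 * (lam - 1) + 1, by omega⟩
    (fun e ↦ by rw [charSum, sum_insert h0, e.map_zero_eq_one, Int.cast_one, charSum])
    (by rw [hcard]; omega)
  exact ⟨a, by push_cast [hpq] at ha; linarith⟩

end BiquadraticResidues

section StableSets

variable {F : Type*} [Field F] [DecidableEq F] {D : Finset F} {t : Fˣ} {q : ℕ}

theorem IsDifferenceSet.exists_smul_eq_self_one_mem {lam : ℕ} (hD : IsDifferenceSet D lam)
    (hcard : 2 ≤ #D) {s : F} (hs : t • (s +ᵥ D) = s +ᵥ D) :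
    ∃ D' : Finset F, IsDifferenceSet D' lam ∧ #D' = #D ∧ t • D' = D' ∧ 1 ∈ D' := by
  obtain ⟨a, ha, ha0⟩ := exists_mem_ne (s := s +ᵥ D) (by rwa [card_vadd_finset]) 0
  refine ⟨(Units.mk0 a ha0)⁻¹ • (s +ᵥ D), (hD.vadd s).smul _,
    (card_smul_finset _ _).trans (card_vadd_finset s D), by rw [smul_comm, hs], ?_⟩
  rw [mem_inv_smul_finset_iff, Units.smul_mk0, smul_eq_mul, mul_one]
  exact ha

variable [Fintype F]

theorem powFiber_one_subset (ht : IsPrimitiveRoot t q) (hD : t • D = D) (h1 : 1 ∈ D) :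
    powFiber q 1 ⊆ D := fun x hx ↦ by
  have : NeZero q := ⟨ht.eq_orderOf ▸ (orderOf_pos t).ne'⟩
  have htF := IsPrimitiveRoot.coe_units_iff.2 ht
  obtain ⟨k, -, rfl⟩ := htF.eq_pow_of_pow_eq_one (mem_powFiber.1 hx)
  have hk : t ^ k • D = D := pow_mem (show t ∈ MulAction.stabilizer Fˣ D from hD) k
  rw [← hk]
  exact mem_smul_finset.2 ⟨1, h1, by simp [Units.smul_def]⟩

theorem eq_insert_zero_powFiber (hq : 1 < q) (ht : IsPrimitiveRoot t q) (hD : t • D = D)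
    (h1 : 1 ∈ D) (hcard : #D = q + 1) : D = insert 0 (powFiber q 1) := by
  have hsub := powFiber_one_subset ht hD h1
  have hqF : q ∣ Fintype.card F - 1 := by
    rw [ht.eq_orderOf, ← Nat.card_eq_fintype_card, ← Nat.card_units]
    exact orderOf_dvd_natCard t
  obtain ⟨b, hb⟩ := card_eq_one.1 (show #(D \ powFiber q 1) = 1 by
    rw [card_sdiff_of_subset hsub, card_powFiber_one hqF, hcard, Nat.add_sub_cancel_left])
  have hfix : t • (D \ powFiber q 1) = D \ powFiber q 1 := by
    rw [smul_finset_sdiff, hD, smul_powFiber, ← Units.val_pow_eq_pow_val, ht.pow_eq_one,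
      Units.val_one, one_mul]
  rw [hb, smul_finset_singleton, singleton_inj, Units.smul_def, smul_eq_mul,
    mul_left_eq_self₀, Units.val_eq_one] at hfix
  rw [← hfix.resolve_left (ht.ne_one hq), ← union_sdiff_of_subset hsub, hb, union_comm]
  rfl

end StableSets

theorem eq_or_eq_add_one_of_sq_eq {q k lam : ℕ} (hq : q.Prime) (hk2 : 2 ≤ k) (hk : k ≤ 2 * q)
    (h : (k : ℤ) ^ 2 = k - lam + lam * (4 * q + 1)) :
    k = q ∧ q = 4 * lam + 1 ∨ k = q + 1 ∧ q + 1 = 4 * lam := by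
  obtain ⟨j, rfl⟩ : ∃ j, k = j + 1 := ⟨k - 1, by omega⟩
  have hprod : (j + 1) * j = q * (4 * lam) := by
    zify
    push_cast at h
    linear_combination h
  rcases hq.dvd_mul.1 ⟨_, hprod⟩ with ⟨m, hm⟩ | ⟨m, hm⟩
  · rw [hm, mul_assoc, mul_right_inj' hq.ne_zero] at hprod
    have : m ≤ 2 := by
      rw [hm, mul_comm] at hk
      exact Nat.le_of_mul_le_mul_right hk hq.pos
    interval_cases m <;> omega
  · rw [hm, mul_left_comm, mul_right_inj' hq.ne_zero] at hprod
    have : m < 2 := by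
      by_contra!
      nlinarith
    interval_cases m <;> omega

section Main

variable {p q lam : ℕ} [Fact p.Prime] {D : Finset (ZMod p)}

theorem IsDifferenceSet.exists_isPrimitiveRoot_smul_eq_self (hD : IsDifferenceSet D lam)
    (hq : q.Prime) (hpq : p = 4 * q + 1) (hcard : 2 ≤ #D) (hlam : 2 * lam < #D)
    (hcardp : #D < p + lam) :
    ∃ t : (ZMod p)ˣ, IsPrimitiveRoot t q ∧
      ∃ D' : Finset (ZMod p), IsDifferenceSet D' lam ∧ #D' = #D ∧ t • D' = D' ∧ 1 ∈ D' := by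
  have hunits : Nat.card (ZMod p)ˣ = 4 * q := by
    rw [Nat.card_eq_fintype_card, ZMod.card_units, hpq, Nat.add_sub_cancel]
  obtain ⟨t, ht⟩ := exists_units_isPrimitiveRoot (F := ZMod p) (q := q)
    ⟨4, by rw [ZMod.card]; omega⟩
  have hmult (r : ℕ) (hrp : r.Coprime p) (hr : r.Prime) (hrn : r ∣ #D - lam) :
      t ∈ Subgroup.zpowers (ZMod.unitOfCoprime r hrp) ∨
        -1 ∈ Subgroup.zpowers (ZMod.unitOfCoprime r hrp) := by
    refine mem_zpowers_or_neg_one_mem_zpowers (fun h ↦ ?_) fun l hl hlq ↦ ?_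
    · have hr1 : ((r : ℕ) : ZMod p) = (1 : ℕ) := by
        simpa using congrArg Units.val h
      have hrle := Nat.le_of_dvd (by omega) hrn
      rw [ZMod.natCast_eq_natCast_iff'] at hr1
      rw [Nat.mod_eq_of_lt (by omega), Nat.mod_eq_of_lt (by omega)] at hr1
      exact hr.ne_one hr1
    · rw [hunits, show 4 * q = 2 ^ 2 * q from rfl, hl.dvd_mul] at hlq
      rw [← ht.eq_orderOf, ← Nat.prime_dvd_prime_iff_eq hl hq,
        ← Nat.prime_dvd_prime_iff_eq hl Nat.prime_two]
      exact hlq.symm.imp_right hl.dvd_of_dvd_pow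
  have hcop : (#D - lam).Coprime p :=
    (Nat.coprime_of_lt_prime (by omega) (by omega) Fact.out).symm
  obtain ⟨g, hg⟩ := hD.exists_smul_eq_vadd (by omega) (by omega) hcop hmult
  obtain ⟨s, hs⟩ := exists_smul_vadd_eq_self (ht.ne_one hq.one_lt) hg
  exact ⟨t, ht, hD.exists_smul_eq_self_one_mem hcard hs⟩

theorem IsDifferenceSet.card_le_one (hD : IsDifferenceSet D lam) (hq : q.Prime) (hq3 : 3 < q)
    (hpq : p = 4 * q + 1) (hcard : #D ≤ 2 * q) : #D ≤ 1 := by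
  by_contra! hcard2
  have hsq := hD.card_sq
  have hpq' : (p : ℤ) = 4 * q + 1 := by omega
  rw [ZMod.card, hpq'] at hsq
  have hparam := eq_or_eq_add_one_of_sq_eq hq hcard2 hcard hsq
  obtain ⟨t, ht, D', hD', hcard', htD', h1⟩ :=
    hD.exists_isPrimitiveRoot_smul_eq_self hq hpq hcard2 (by omega) (by omega)
  rcases hparam with ⟨hk, -⟩ | ⟨hk, -⟩
  · have hsub := powFiber_one_subset ht htD' h1
    have hqF : q ∣ Fintype.card (ZMod p) - 1 := ⟨4, by rw [ZMod.card]; omega⟩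
    rw [← eq_of_subset_of_card_le hsub (by rw [card_powFiber_one hqF, hcard', hk])] at hD'
    exact (Nat.prime_iff_prime_int.1 hq).irreducible.not_isSquare (hD'.isSquare_of_powFiber hpq)
  · rw [eq_insert_zero_powFiber hq.one_lt ht htD' h1 (hcard'.trans hk)] at hD'
    obtain ⟨a, ha⟩ := hD'.exists_eq_sq_add_two_of_insert_zero_powFiber hpq
    have h3q := mt (Nat.prime_dvd_prime_iff_eq Nat.prime_three hq).1 hq3.ne
    have h3p := mt (Nat.prime_dvd_prime_iff_eq Nat.prime_three (Fact.out : p.Prime)).1 (by omega)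
    have h3a : a ^ 2 % 3 = 0 ∨ a ^ 2 % 3 = 1 := by
      obtain h | h | h : a % 3 = 0 ∨ a % 3 = 1 ∨ a % 3 = 2 := by omega
      all_goals simp [sq, Int.mul_emod, h]
    omega

end Main

/-- If `q > 3` is a prime such that `p = 4q + 1` is also prime, then there is no nontrivial
difference set in the cyclic group `ZMod p`. -/
theorem no_nontrivial_diff_set_4q_add_one (q p : ℕ) (hq : q.Prime) (hq3 : 3 < q)
    (hpdef : p = 4 * q + 1) (hp : p.Prime)
    (D : Finset (ZMod p)) (lam : ℕ) (hD : IsDiffSetZMod p D lam) :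
    D.card ≤ 1 ∨ p - 1 ≤ D.card := by
  have : Fact p.Prime := ⟨hp⟩
  have hdiff := hD.isDifferenceSet
  have hcompl := card_add_card_compl D
  rw [ZMod.card] at hcompl
  rcases le_or_gt #D (2 * q) with hsmall | hlarge
  · exact Or.inl (hdiff.card_le_one hq hq3 hpdef hsmall)
  · have := hdiff.compl.card_le_one hq hq3 hpdef (by omega)
    omega
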